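/- If h, k ∈ M₊ have equal central support, k is properly infinite, and h is a countable sum of finite elements, then k ≈ λk for every λ ∈ (0,∞) and (h + k) ≈ k. -/

import Mathlib

open ContinuousLinearMap Filter Topology

universe u

noncomputable section

variable {H : Type u} [NormedAddCommGroup H] [InnerProductSpace ℂ H] [CompleteSpace H]

/-- `p` is an (orthogonal) projection belonging to the von Neumann algebra `M`. -/
def IsProjIn (M : VonNeumannAlgebra H) (p : H →L[ℂ] H) : Prop :=
  p ∈ M ∧ IsSelfAdjoint p ∧ p * p = p

/-- Murray–von Neumann equivalence of `p` and `q` relative to `M`: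
there is a partial isometry `v ∈ M` with `v* v = p` and `v v* = q`. -/
def MvNEquiv (M : VonNeumannAlgebra H) (p q : H →L[ℂ] H) : Prop :=
  ∃ v ∈ M, adjoint v * v = p ∧ v * adjoint v = q

/-- The order on projections: `p ≤ q` iff `p q = p = q p`. -/
def ProjLE (p q : H →L[ℂ] H) : Prop := p * q = p ∧ q * p = p

/-- Murray–von Neumann subequivalence `p ≼ q`: `p` is equivalent to a subprojection of `q`. -/
def SubEquiv (M : VonNeumannAlgebra H) (p q : H →L[ℂ] H) : Prop :=
  ∃ r, IsProjIn M r ∧ MvNEquiv M p r ∧ ProjLE r q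

/-- `z` is a central projection of `M`. -/
def IsCentralProj (M : VonNeumannAlgebra H) (z : H →L[ℂ] H) : Prop :=
  IsProjIn M z ∧ ∀ x ∈ M, z * x = x * z

/-- A projection `p` is finite: `p ∼ q ≤ p` implies `q = p`. -/
def FiniteProj (M : VonNeumannAlgebra H) (p : H →L[ℂ] H) : Prop :=
  ∀ q, IsProjIn M q → ProjLE q p → MvNEquiv M p q → q = p

/-- A projection `p` is properly infinite: it is a countably infinite sum of pairwise
orthogonal projections, each equivalent to `p`. -/
def ProperlyInfiniteProj (M : VonNeumannAlgebra H) (p : H →L[ℂ] H) : Prop :=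
  p ≠ 0 ∧ ∃ e : ℕ → H →L[ℂ] H, (∀ n, IsProjIn M (e n)) ∧
    (Pairwise fun m n => e m * e n = 0) ∧ (∀ n, MvNEquiv M (e n) p) ∧
    ∀ ξ : H, HasSum (fun n => e n ξ) (p ξ)

/-- `z` is the central support of `h`: the smallest central projection with `z h = h`. -/
def IsCentralSupport (M : VonNeumannAlgebra H) (h z : H →L[ℂ] H) : Prop :=
  IsCentralProj M z ∧ z * h = h ∧ ∀ w, IsCentralProj M w → w * h = h → z * w = z

/-- The projection `e` is σ-finite relative to `M`: every family of pairwise orthogonal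
nonzero subprojections of `e` in `M` is countable. -/
def SigmaFiniteProj (M : VonNeumannAlgebra H) (e : H →L[ℂ] H) : Prop :=
  ∀ S : Set (H →L[ℂ] H), (∀ q ∈ S, IsProjIn M q ∧ q ≠ 0 ∧ ProjLE q e) →
    (S.Pairwise fun a b => a * b = 0) → S.Countable

/-- Kadison–Pedersen equivalence on the positive cone: `h ≈ k` iff there is a family
`{x_α} ⊆ M` with `h = Σ x_α* x_α` and `k = Σ x_α x_α*` (sums in the strong topology). -/
def KPEquiv (M : VonNeumannAlgebra H) (h k : H →L[ℂ] H) : Prop :=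
  ∃ (ι : Type u) (x : ι → H →L[ℂ] H), (∀ i, x i ∈ M) ∧
    (∀ ξ : H, HasSum (fun i => (adjoint (x i) * x i) ξ) (h ξ)) ∧
    (∀ ξ : H, HasSum (fun i => (x i * adjoint (x i)) ξ) (k ξ))

/-- Operator order: `a ≤ b` iff `b - a` is positive. -/
def OpLE (a b : H →L[ℂ] H) : Prop := (b - a).IsPositive

/-- `h ∈ M₊` is finite in the Kadison–Pedersen sense: `h ≈ k ≤ h` implies `k = h`. -/
def KPFinite (M : VonNeumannAlgebra H) (h : H →L[ℂ] H) : Prop :=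
  ∀ k, k ∈ M → k.IsPositive → OpLE k h → KPEquiv M h k → k = h

/-- `h ∈ M₊` is properly infinite: `z h` is finite and nonzero for no central projection `z`. -/
def KPProperlyInfinite (M : VonNeumannAlgebra H) (h : H →L[ℂ] H) : Prop :=
  h ≠ 0 ∧ ∀ z, IsCentralProj M z → KPFinite M (z * h) → z * h = 0

/-- The set of projections of `M`. -/
def ProjSet (M : VonNeumannAlgebra H) := {p : H →L[ℂ] H // IsProjIn M p}

/-- The strong operator topology on the projections of `M` (topology of pointwise convergence). -/
instance (M : VonNeumannAlgebra H) : TopologicalSpace (ProjSet M) :=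
  TopologicalSpace.induced (fun p : ProjSet M => (fun ξ => p.1 ξ : H → H)) inferInstance

/-- The quotient `P(M)/∼` of the projections of `M` by Murray–von Neumann equivalence,
carrying the quotient (strong operator) topology. -/
abbrev PQuot (M : VonNeumannAlgebra H) :=
  Quot (fun p q : ProjSet M => MvNEquiv M p.1 q.1)

/-- The quotient map `P(M) → P(M)/∼`. -/
def pquotMk (M : VonNeumannAlgebra H) : ProjSet M → PQuot M := Quot.mk _

/-- The strong operator topology on `B(H)`. -/
def SOT : TopologicalSpace (H →L[ℂ] H) :=
  TopologicalSpace.induced (fun a : H →L[ℂ] H => (fun ξ => a ξ : H → H)) inferInstance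

/-- The order induced on `P(M)/∼` by Murray–von Neumann subequivalence. -/
def QLE (M : VonNeumannAlgebra H) (a b : PQuot M) : Prop :=
  ∃ p q : ProjSet M, a = pquotMk M p ∧ b = pquotMk M q ∧ SubEquiv M p.1 q.1

set_option linter.unusedSectionVars false

open scoped InnerProductSpace

/-- Strong sums of operators. -/
def SSum {ι : Type*} (a : ι → H →L[ℂ] H) (h : H →L[ℂ] H) : Prop :=
  ∀ ξ : H, HasSum (fun i => a i ξ) (h ξ)

/-- Quadratic form. -/
def qf (a : H →L[ℂ] H) (ξ : H) : ℝ := (inner ℂ (a ξ) ξ).re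

lemma qf_nonneg {a : H →L[ℂ] H} (ha : 0 ≤ a) (ξ : H) : 0 ≤ qf a ξ :=
  ((nonneg_iff_isPositive a).1 ha).re_inner_nonneg_left ξ

lemma qf_add (a b : H →L[ℂ] H) (ξ : H) : qf (a + b) ξ = qf a ξ + qf b ξ := by
  simp [qf]

lemma qf_sub (a b : H →L[ℂ] H) (ξ : H) : qf (a - b) ξ = qf a ξ - qf b ξ := by
  simp [qf]

lemma qf_sum {ι : Type*} (s : Finset ι) (a : ι → H →L[ℂ] H) (ξ : H) :
    qf (∑ i ∈ s, a i) ξ = ∑ i ∈ s, qf (a i) ξ := by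
  simp [qf]

lemma sa_of_nonneg {a : H →L[ℂ] H} (ha : 0 ≤ a) : IsSelfAdjoint a :=
  ((nonneg_iff_isPositive a).1 ha).isSelfAdjoint

lemma le_of_qf {a b : H →L[ℂ] H} (ha : IsSelfAdjoint a) (hb : IsSelfAdjoint b)
    (h : ∀ ξ, qf a ξ ≤ qf b ξ) : a ≤ b := by
  rw [ContinuousLinearMap.le_def, isPositive_def']
  refine ⟨hb.sub ha, fun ξ => ?_⟩
  have := h ξ
  have h2 := qf_sub b a ξ
  show 0 ≤ qf (b - a) ξ
  linarith

lemma qf_mono {a b : H →L[ℂ] H} (h : a ≤ b) (ξ : H) : qf a ξ ≤ qf b ξ := by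
  have := qf_nonneg (sub_nonneg.2 h) ξ
  rw [qf_sub] at this; linarith

lemma norm_sq_le_qf {a : H →L[ℂ] H} (ha : 0 ≤ a) (ξ : H) :
    ‖a ξ‖ ^ 2 ≤ ‖a‖ * qf a ξ := by
  set s := CFC.sqrt a with hs
  have hss : s * s = a := CFC.sqrt_mul_sqrt_self a ha
  have hsa : IsSelfAdjoint s := sa_of_nonneg (CFC.sqrt_nonneg a)
  have h1 : ‖s ξ‖ ^ 2 = qf a ξ := by
    rw [← hss, qf, ← inner_self_eq_norm_sq (𝕜 := ℂ)]
    have : inner ℂ ((s * s) ξ) ξ = inner ℂ (s ξ) (s ξ) := by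
      rw [mul_apply_eq_comp, ← ContinuousLinearMap.adjoint_inner_right]
      rw [show adjoint s = s from hsa]
    rw [this]; rfl
  have h2 : ‖s‖ ^ 2 = ‖a‖ := by
    rw [← hss, pow_two]; conv_rhs => rw [← hsa.star_eq, hsa.star_eq]
    nth_rewrite 3 [← hsa.star_eq]
    exact (CStarRing.norm_star_mul_self).symm
  calc ‖a ξ‖ ^ 2 = ‖s (s ξ)‖ ^ 2 := by rw [← hss]; rfl
    _ ≤ (‖s‖ * ‖s ξ‖) ^ 2 := by gcongr; exact s.le_opNorm _
    _ = ‖a‖ * qf a ξ := by rw [mul_pow, h1, h2]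

lemma norm_mono {a b : H →L[ℂ] H} (ha : 0 ≤ a) (h : a ≤ b) : ‖a‖ ≤ ‖b‖ :=
  CStarAlgebra.norm_le_norm_of_nonneg_of_le ha h

lemma SSum.qf {ι : Type*} {a : ι → H →L[ℂ] H} {h : H →L[ℂ] H} (hs : SSum a h) (ξ : H) :
    HasSum (fun i => qf (a i) ξ) (qf h ξ) := by
  have := (hs ξ).mapL ((innerSL ℂ ξ))
  have h2 := Complex.reCLM.hasSum this
  have e : ∀ b : H →L[ℂ] H, _root_.qf b ξ = Complex.reCLM (innerSL ℂ ξ (b ξ)) := by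
    intro b
    simp only [_root_.qf, Complex.reCLM_apply, innerSL_apply_apply]
    exact inner_re_symm (𝕜 := ℂ) _ _
  simp only [e]; exact h2

open scoped ComplexOrder in
lemma SSum.nonneg {ι : Type*} {a : ι → H →L[ℂ] H} {h : H →L[ℂ] H} (hs : SSum a h)
    (ha : ∀ i, 0 ≤ a i) : 0 ≤ h := by
  rw [nonneg_iff_isPositive, isPositive_iff_complex]
  intro ξ
  have := (hs ξ).mapL ((innerSL ℂ ξ))
  have h1 : 0 ≤ inner ℂ (h ξ) ξ := by
    have h2 : 0 ≤ inner ℂ ξ (h ξ) := by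
      have : HasSum (fun i => inner ℂ ξ (a i ξ)) (inner ℂ ξ (h ξ)) := this
      exact this.nonneg (fun i => ((nonneg_iff_isPositive _).1 (ha i)).inner_nonneg_right ξ)
    rw [← inner_conj_symm]
    exact star_nonneg_iff.2 h2
  rw [Complex.le_def] at h1
  refine ⟨?_, h1.1⟩
  apply Complex.ext <;> simp
  exact h1.2

lemma SSum.sum_le {ι : Type*} {a : ι → H →L[ℂ] H} {h : H →L[ℂ] H} (hs : SSum a h)
    (ha : ∀ i, 0 ≤ a i) (s : Finset ι) : ∑ i ∈ s, a i ≤ h := by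
  refine le_of_qf (sa_of_nonneg (Finset.sum_nonneg fun i _ => ha i)) (sa_of_nonneg (hs.nonneg ha))
    fun ξ => ?_
  rw [qf_sum]
  exact sum_le_hasSum s (fun i _ => qf_nonneg (ha i) ξ) (hs.qf ξ)

lemma SSum.le {ι : Type*} {a : ι → H →L[ℂ] H} {h : H →L[ℂ] H} (hs : SSum a h)
    (ha : ∀ i, 0 ≤ a i) (i : ι) : a i ≤ h := by
  simpa using hs.sum_le ha {i}

lemma SSum.le_of_sum_le {ι : Type*} {a : ι → H →L[ℂ] H} {h k : H →L[ℂ] H} (hs : SSum a h)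
    (ha : ∀ i, 0 ≤ a i) (hk : ∀ s : Finset ι, ∑ i ∈ s, a i ≤ k) : h ≤ k := by
  have k0 : 0 ≤ k := by simpa using hk ∅
  refine le_of_qf (sa_of_nonneg (hs.nonneg ha)) (sa_of_nonneg k0) fun ξ => ?_
  refine hasSum_le_of_sum_le (hs.qf ξ) fun s => ?_
  rw [← qf_sum]; exact qf_mono (hk s) ξ

lemma SSum.unique {ι : Type*} {a : ι → H →L[ℂ] H} {h k : H →L[ℂ] H} (hs : SSum a h)
    (hk : SSum a k) : h = k := by
  ext ξ; exact (hs ξ).unique (hk ξ)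

/-- weak convergence implies strong convergence for sums of positive operators -/
lemma SSum.of_qf {ι : Type*} {a : ι → H →L[ℂ] H} {h : H →L[ℂ] H} (ha : ∀ i, 0 ≤ a i) (h0 : 0 ≤ h)
    (hq : ∀ ξ, HasSum (fun i => _root_.qf (a i) ξ) (_root_.qf h ξ)) : SSum a h := by
  intro ξ
  have hle : ∀ s : Finset ι, ∑ i ∈ s, a i ≤ h := fun s =>
    le_of_qf (sa_of_nonneg (Finset.sum_nonneg fun i _ => ha i)) (sa_of_nonneg h0) fun ξ => by
      rw [qf_sum]; exact sum_le_hasSum s (fun i _ => qf_nonneg (ha i) ξ) (hq ξ)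
  have key : ∀ s : Finset ι, ‖∑ i ∈ s, a i ξ - h ξ‖ ^ 2 ≤
      ‖h‖ * (_root_.qf h ξ - ∑ i ∈ s, _root_.qf (a i) ξ) := fun s => by
    have d0 : 0 ≤ h - ∑ i ∈ s, a i := sub_nonneg.2 (hle s)
    have d1 : h - ∑ i ∈ s, a i ≤ h := sub_le_self _ (Finset.sum_nonneg fun i _ => ha i)
    calc ‖∑ i ∈ s, a i ξ - h ξ‖ ^ 2 = ‖(h - ∑ i ∈ s, a i) ξ‖ ^ 2 := by
          rw [norm_sub_rev]; simp
      _ ≤ ‖h - ∑ i ∈ s, a i‖ * _root_.qf (h - ∑ i ∈ s, a i) ξ := norm_sq_le_qf d0 ξ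
      _ ≤ ‖h‖ * _root_.qf (h - ∑ i ∈ s, a i) ξ :=
          mul_le_mul_of_nonneg_right (norm_mono d0 d1) (qf_nonneg d0 ξ)
      _ = _ := by rw [qf_sub, qf_sum]
  have lim : Tendsto (fun s : Finset ι => ‖h‖ * (_root_.qf h ξ - ∑ i ∈ s, _root_.qf (a i) ξ))
      atTop (𝓝 0) := by
    have : Tendsto (fun s : Finset ι => ∑ i ∈ s, _root_.qf (a i) ξ) atTop (𝓝 (_root_.qf h ξ)) := hq ξ
    have := (tendsto_const_nhds (x := _root_.qf h ξ)).sub this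
    simpa using this.const_mul ‖h‖
  have l2 : Tendsto (fun s : Finset ι => ‖∑ i ∈ s, a i ξ - h ξ‖ ^ 2) atTop (𝓝 0) :=
    squeeze_zero (fun s => by positivity) key lim
  show Tendsto (fun s : Finset ι => ∑ i ∈ s, a i ξ) atTop (𝓝 (h ξ))
  rw [tendsto_iff_norm_sub_tendsto_zero]
  have := l2.sqrt
  simpa [Real.sqrt_sq] using this

lemma mem_of_comm (M : VonNeumannAlgebra H) {a : H →L[ℂ] H}
    (h : ∀ y ∈ M.commutant, y * a = a * y) : a ∈ M := by
  rw [← M.commutant_commutant, VonNeumannAlgebra.mem_commutant_iff]; exact h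

lemma comm_of_mem {M : VonNeumannAlgebra H} {a y : H →L[ℂ] H} (ha : a ∈ M)
    (hy : y ∈ M.commutant) : y * a = a * y :=
  ((VonNeumannAlgebra.mem_commutant_iff.1 hy) a ha).symm

lemma SSum.mem {M : VonNeumannAlgebra H} {ι : Type*} {a : ι → H →L[ℂ] H} {h : H →L[ℂ] H}
    (hs : SSum a h) (ha : ∀ i, a i ∈ M) : h ∈ M := by
  refine mem_of_comm M fun y hy => ?_
  ext ξ
  have h1 := (hs ξ).mapL y
  have h2 := hs (y ξ)
  have : (fun i => y (a i ξ)) = fun i => a i (y ξ) := by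
    funext i; exact congrArg (fun t : H →L[ℂ] H => t ξ) (comm_of_mem (ha i) hy)
  rw [this] at h1
  exact h1.unique h2

lemma SSum.conj {ι : Type*} {a : ι → H →L[ℂ] H} {h : H →L[ℂ] H} (hs : SSum a h)
    (s t : H →L[ℂ] H) : SSum (fun i => s * a i * t) (s * h * t) := fun ξ => by
  simpa using (hs (t ξ)).mapL s

lemma SSum.mulLeft {ι : Type*} {a : ι → H →L[ℂ] H} {h : H →L[ℂ] H} (hs : SSum a h)
    (s : H →L[ℂ] H) : SSum (fun i => s * a i) (s * h) := fun ξ => by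
  simpa using (hs ξ).mapL s

lemma SSum.smul {ι : Type*} {a : ι → H →L[ℂ] H} {h : H →L[ℂ] H} (hs : SSum a h)
    (c : ℂ) : SSum (fun i => c • a i) (c • h) := fun ξ => by
  simpa using (hs ξ).const_smul c

lemma SSum.add {ι : Type*} {a b : ι → H →L[ℂ] H} {h k : H →L[ℂ] H} (hs : SSum a h)
    (hk : SSum b k) : SSum (fun i => a i + b i) (h + k) := fun ξ => by
  simpa using (hs ξ).add (hk ξ)

/-- Vigier -/
lemma exists_SSum {ι : Type*} {a : ι → H →L[ℂ] H} {k : H →L[ℂ] H}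
    (ha : ∀ i, 0 ≤ a i) (hk : ∀ s : Finset ι, ∑ i ∈ s, a i ≤ k) : ∃ h, SSum a h := by
  have k0 : 0 ≤ k := by simpa using hk ∅
  have sumq : ∀ ξ, Summable fun i => qf (a i) ξ := fun ξ =>
    summable_of_sum_le (fun i => qf_nonneg (ha i) ξ) (c := qf k ξ) fun s => by
      rw [← qf_sum]; exact qf_mono (hk s) ξ
  have hb : ∀ (s : Finset ι) ξ, ‖∑ i ∈ s, a i ξ‖ ^ 2 ≤ ‖k‖ * ∑ i ∈ s, qf (a i) ξ := fun s ξ => by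
    have s0 : 0 ≤ ∑ i ∈ s, a i := Finset.sum_nonneg fun i _ => ha i
    calc ‖∑ i ∈ s, a i ξ‖ ^ 2 = ‖(∑ i ∈ s, a i) ξ‖ ^ 2 := by simp
      _ ≤ _ := norm_sq_le_qf s0 ξ
      _ ≤ ‖k‖ * qf (∑ i ∈ s, a i) ξ :=
          mul_le_mul_of_nonneg_right (norm_mono s0 (hk s)) (qf_nonneg s0 ξ)
      _ = _ := by rw [qf_sum]
  have sm : ∀ ξ, Summable fun i => a i ξ := fun ξ => by
    rw [summable_iff_vanishing_norm]
    intro ε hε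
    have hs := (summable_iff_vanishing_norm.1 (sumq ξ)) (ε ^ 2 / (‖k‖ + 1)) (by positivity)
    obtain ⟨s, hs⟩ := hs
    refine ⟨s, fun t ht => ?_⟩
    have h1 := hs t ht
    have h2 := hb t ξ
    have h3 : ∑ i ∈ t, qf (a i) ξ < ε ^ 2 / (‖k‖ + 1) := lt_of_le_of_lt (le_abs_self _) h1
    have h0 : 0 ≤ ∑ i ∈ t, qf (a i) ξ := Finset.sum_nonneg fun i _ => qf_nonneg (ha i) ξ
    rw [lt_div_iff₀ (by positivity)] at h3
    have : ‖∑ i ∈ t, a i ξ‖ ^ 2 < ε ^ 2 := by nlinarith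
    exact lt_of_pow_lt_pow_left₀ 2 hε.le this
  let L : H →ₗ[ℂ] H :=
    { toFun := fun ξ => ∑' i, a i ξ
      map_add' := fun ξ η => by
        simp only [map_add]; exact (sm ξ).tsum_add (sm η)
      map_smul' := fun c ξ => by
        simp only [map_smul, RingHom.id_apply]; exact (sm ξ).tsum_const_smul c }
  refine ⟨L.mkContinuous ‖k‖ fun ξ => ?_, fun ξ => (sm ξ).hasSum⟩
  have : Tendsto (fun s : Finset ι => ∑ i ∈ s, a i ξ) atTop (𝓝 (∑' i, a i ξ)) := (sm ξ).hasSum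
  refine le_of_tendsto this.norm (Eventually.of_forall fun s => ?_)
  have s0 : 0 ≤ ∑ i ∈ s, a i := Finset.sum_nonneg fun i _ => ha i
  calc ‖∑ i ∈ s, a i ξ‖ = ‖(∑ i ∈ s, a i) ξ‖ := by simp
    _ ≤ _ := le_opNorm _ _
    _ ≤ _ := by gcongr; exact norm_mono s0 (hk s)

/-- iterated sums -/
lemma SSum.sigma {ι : Type*} {κ : ι → Type*} {a : ∀ i, κ i → H →L[ℂ] H} {b : ι → H →L[ℂ] H}
    {h : H →L[ℂ] H} (ha : ∀ i j, 0 ≤ a i j) (h1 : ∀ i, SSum (a i) (b i)) (h2 : SSum b h) :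
    SSum (fun p : Σ i, κ i => a p.1 p.2) h := by
  have b0 : ∀ i, 0 ≤ b i := fun i => (h1 i).nonneg (ha i)
  refine SSum.of_qf (fun p => ha _ _) (h2.nonneg b0) fun ξ => ?_
  have s : Summable (fun p : Σ i, κ i => _root_.qf (a p.1 p.2) ξ) := by
    rw [summable_sigma_of_nonneg (fun p => qf_nonneg (ha _ _) ξ)]
    refine ⟨fun i => ((h1 i).qf ξ).summable, ?_⟩
    have : (fun i => ∑' j, _root_.qf (a i j) ξ) = fun i => _root_.qf (b i) ξ := by
      funext i; exact ((h1 i).qf ξ).tsum_eq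
    rw [this]; exact (h2.qf ξ).summable
  have := s.hasSum
  have h3 := this.sigma (fun i => (h1 i).qf ξ)
  rwa [h3.unique (h2.qf ξ)] at this

lemma SSum.of_sigma {ι : Type*} {κ : ι → Type*} {a : ∀ i, κ i → H →L[ℂ] H} {b : ι → H →L[ℂ] H}
    {h : H →L[ℂ] H} (h1 : ∀ i, SSum (a i) (b i))
    (h2 : SSum (fun p : Σ i, κ i => a p.1 p.2) h) : SSum b h :=
  fun ξ => (h2 ξ).sigma fun i => h1 i ξ

lemma SSum.equiv {ι κ : Type*} {a : ι → H →L[ℂ] H} {h : H →L[ℂ] H} (e : κ ≃ ι)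
    (h1 : SSum a h) : SSum (fun j => a (e j)) h :=
  fun ξ => (e.hasSum_iff (f := fun i => a i ξ)).2 (h1 ξ)

/-- fubini for positive sums -/
lemma SSum.swap {ι κ : Type*} {a : ι → κ → H →L[ℂ] H} {b : ι → H →L[ℂ] H} {c : κ → H →L[ℂ] H}
    {h : H →L[ℂ] H} (ha : ∀ i j, 0 ≤ a i j) (h1 : ∀ i, SSum (a i) (b i))
    (h2 : SSum b h) (h3 : ∀ j, SSum (fun i => a i j) (c j)) : SSum c h := by
  have s := SSum.sigma ha h1 h2
  let e : (Σ _ : κ, ι) ≃ (Σ _ : ι, κ) :=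
    ⟨fun p => ⟨p.2, p.1⟩, fun p => ⟨p.2, p.1⟩, fun _ => rfl, fun _ => rfl⟩
  exact SSum.of_sigma (a := fun j i => a i j) h3 (s.equiv e)

lemma sqrt_mem {M : VonNeumannAlgebra H} {k : H →L[ℂ] H} (hk : k ∈ M) : CFC.sqrt k ∈ M := by
  refine mem_of_comm M fun y hy => ?_
  have : Commute k y := (comm_of_mem hk hy).symm
  have h2 := this.cfc_nnreal NNReal.sqrt
  rw [← CFC.sqrt_eq_cfc] at h2
  exact h2.eq.symm

lemma qf_star_mul_self (x : H →L[ℂ] H) (ξ : H) : qf (star x * x) ξ = ‖x ξ‖ ^ 2 := by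
  rw [qf, ← inner_self_eq_norm_sq (𝕜 := ℂ), mul_apply_eq_comp, star_eq_adjoint,
    ContinuousLinearMap.adjoint_inner_left]
  rfl

/-- Douglas factorization in `M`. -/
lemma douglas {M : VonNeumannAlgebra H} {x s : H →L[ℂ] H} (hx : x ∈ M) (hs : s ∈ M)
    (s0 : IsSelfAdjoint s) (hle : star x * x ≤ s * s) : ∃ a ∈ M, x = a * s := by
  have hn : ∀ ξ, ‖x ξ‖ ≤ ‖s ξ‖ := fun ξ => by
    have := qf_mono hle ξ
    rw [qf_star_mul_self] at this
    nth_rewrite 1 [← s0.star_eq] at this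
    rw [qf_star_mul_self] at this
    exact (sq_le_sq₀ (norm_nonneg _) (norm_nonneg _)).1 this
  let K : Submodule ℂ H := (LinearMap.range (s : H →ₗ[ℂ] H)).topologicalClosure
  have hK : ∀ ξ, s ξ ∈ K := fun ξ =>
    Submodule.le_topologicalClosure _ (LinearMap.mem_range_self _ ξ)
  have : CompleteSpace K := (Submodule.isClosed_topologicalClosure _).completeSpace_coe
  let e : H →ₗ[ℂ] K := (s : H →ₗ[ℂ] H).codRestrict K hK
  have he : DenseRange e := by
    rw [DenseRange, Subtype.dense_iff]
    intro y hy
    have hy' : y ∈ closure (Set.range s) := hy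
    convert hy' using 2
    ext t; constructor
    · rintro ⟨_, ⟨η, rfl⟩, rfl⟩; exact ⟨η, rfl⟩
    · rintro ⟨η, rfl⟩; exact ⟨e η, ⟨η, rfl⟩, rfl⟩
  have hb : ∃ C : ℝ, ∀ ξ, ‖(x : H →ₗ[ℂ] H) ξ‖ ≤ C * ‖e ξ‖ := ⟨1, fun ξ => by
    rw [one_mul]; exact hn ξ⟩
  let g : K →L[ℂ] H := (x : H →ₗ[ℂ] H).extendOfNorm e
  have hg : ∀ ξ, g (e ξ) = x ξ := fun ξ => LinearMap.extendOfNorm_eq he hb ξ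
  let a : H →L[ℂ] H := g ∘L K.orthogonalProjectionOnto
  have has : ∀ ξ, a (s ξ) = x ξ := fun ξ => by
    rw [← hg ξ]
    show g (K.orthogonalProjectionOnto (s ξ)) = _
    congr 1
    exact Submodule.orthogonalProjectionOnto_mem_subspace_eq_self (⟨s ξ, hK ξ⟩ : K)
  have hperp : ∀ η, η ∈ Kᗮ ↔ s η = 0 := fun η => by
    rw [Submodule.orthogonal_closure, Submodule.mem_orthogonal]
    constructor
    · intro h
      have := h (s (s η)) ⟨s η, rfl⟩
      rw [← ContinuousLinearMap.adjoint_inner_right, show adjoint s = s from s0] at this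
      exact inner_self_eq_zero.1 this
    · rintro h _ ⟨t, rfl⟩
      show inner ℂ (s t) η = 0
      rw [← ContinuousLinearMap.adjoint_inner_right, show adjoint s = s from s0, h, inner_zero_right]
  have ha0 : ∀ η, s η = 0 → a η = 0 := fun η h => by
    show g (K.orthogonalProjectionOnto η) = _
    rw [Submodule.orthogonalProjectionOnto_eq_zero_iff.2 ((hperp η).2 h), map_zero]
  refine ⟨a, mem_of_comm M fun y hy => ?_, ?_⟩
  · have hys : ∀ η, y (s η) = s (y η) := fun η =>
      congrArg (fun t : H →L[ℂ] H => t η) (comm_of_mem hs hy)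
    have hyx : ∀ η, y (x η) = x (y η) := fun η =>
      congrArg (fun t : H →L[ℂ] H => t η) (comm_of_mem hx hy)
    have onK : ∀ v ∈ K, y (a v) = a (y v) := by
      intro v hv
      have hv' : v ∈ closure (Set.range s) := hv
      refine closure_minimal (t := {v | y (a v) = a (y v)}) ?_
        (isClosed_eq (by fun_prop) (by fun_prop)) hv'
      rintro _ ⟨η, rfl⟩
      show y (a (s η)) = a (y (s η))
      rw [has, hyx, hys, has]
    ext v
    obtain ⟨p, hp, q, hq, rfl⟩ := K.exists_add_mem_mem_orthogonal v
    have hq' := (hperp q).1 hq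
    have h2 : a (y q) = 0 := ha0 _ (by rw [← hys, hq', map_zero])
    simp only [mul_apply_eq_comp, map_add, onK p hp, ha0 q hq', h2, map_zero]
  · ext ξ; exact (has ξ).symm

lemma smul_mem' {M : VonNeumannAlgebra H} {a : H →L[ℂ] H} (c : ℂ) (ha : a ∈ M) : c • a ∈ M := by
  refine mem_of_comm M fun y hy => ?_
  rw [mul_smul_comm, smul_mul_assoc, comm_of_mem ha hy]

lemma star_mem' {M : VonNeumannAlgebra H} {a : H →L[ℂ] H} (ha : a ∈ M) : star a ∈ M := star_mem ha

lemma KPEquiv.mk' {M : VonNeumannAlgebra H} {h k : H →L[ℂ] H} {ι : Type*} [Small.{u} ι]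
    (x : ι → H →L[ℂ] H) (hx : ∀ i, x i ∈ M) (h1 : SSum (fun i => star (x i) * x i) h)
    (h2 : SSum (fun i => x i * star (x i)) k) : KPEquiv M h k :=
  ⟨Shrink.{u} ι, fun j => x ((equivShrink ι).symm j), fun j => hx _,
    h1.equiv (equivShrink ι).symm, h2.equiv (equivShrink ι).symm⟩

lemma KPEquiv.out {M : VonNeumannAlgebra H} {h k : H →L[ℂ] H} (e : KPEquiv M h k) :
    ∃ (ι : Type u) (x : ι → H →L[ℂ] H), (∀ i, x i ∈ M) ∧ SSum (fun i => star (x i) * x i) h ∧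
    SSum (fun i => x i * star (x i)) k := e

lemma KPEquiv.symm {M : VonNeumannAlgebra H} {h k : H →L[ℂ] H} (e : KPEquiv M h k) :
    KPEquiv M k h := by
  obtain ⟨ι, x, hx, h1, h2⟩ := e.out
  exact KPEquiv.mk' (fun i => star (x i)) (fun i => star_mem (hx i)) (by simpa using h2)
    (by simpa using h1)

lemma KPEquiv.nonneg {M : VonNeumannAlgebra H} {h k : H →L[ℂ] H} (e : KPEquiv M h k) : 0 ≤ h := by
  obtain ⟨ι, x, hx, h1, h2⟩ := e.out
  exact h1.nonneg fun i => star_mul_self_nonneg _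

lemma KPEquiv.mem {M : VonNeumannAlgebra H} {h k : H →L[ℂ] H} (e : KPEquiv M h k) : h ∈ M := by
  obtain ⟨ι, x, hx, h1, h2⟩ := e.out
  exact h1.mem fun i => mul_mem (star_mem (hx i)) (hx i)

lemma SSum.single {ι : Type*} [Unique ι] (a : ι → H →L[ℂ] H) : SSum a (a default) := fun ξ => by
  simpa using hasSum_fintype (fun i => a i ξ)

lemma SSum.bool (a : Bool → H →L[ℂ] H) : SSum a (a true + a false) := fun ξ => by
  simpa using hasSum_fintype (fun i => a i ξ)

lemma KPEquiv.refl {M : VonNeumannAlgebra H} {h : H →L[ℂ] H} (hm : h ∈ M) (h0 : 0 ≤ h) :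
    KPEquiv M h h := by
  have hs : star (CFC.sqrt h) = CFC.sqrt h := (sa_of_nonneg (CFC.sqrt_nonneg h)).star_eq
  have e1 : CFC.sqrt h * CFC.sqrt h = h := CFC.sqrt_mul_sqrt_self h h0
  have s := SSum.single (fun _ : Unit => h)
  exact KPEquiv.mk' (ι := Unit) (fun _ => CFC.sqrt h) (fun _ => sqrt_mem hm)
    (by simpa only [hs, e1] using s) (by simpa only [hs, e1] using s)

lemma KPEquiv.zero_right {M : VonNeumannAlgebra H} {h : H →L[ℂ] H} (e : KPEquiv M h 0) :
    h = 0 := by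
  obtain ⟨ι, x, hx, h1, h2⟩ := e.out
  have : ∀ i, x i = 0 := fun i => by
    have l := h2.le (fun i => mul_star_self_nonneg _) i
    have := le_antisymm l (mul_star_self_nonneg _)
    exact (CStarRing.mul_star_self_eq_zero_iff _).1 this
  simp only [this, mul_zero] at h1
  exact h1.unique fun ξ => by simpa using hasSum_zero

/-- `≈` is completely additive. -/
lemma KPEquiv.ssum {M : VonNeumannAlgebra H} {ι : Type*} [Small.{u} ι] {a b : ι → H →L[ℂ] H}
    {h k : H →L[ℂ] H} (e : ∀ i, KPEquiv M (a i) (b i)) (ha : SSum a h) (hb : SSum b k) :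
    KPEquiv M h k := by
  choose κ x hx h1 h2 using fun i => (e i).out
  exact KPEquiv.mk' (fun p : Σ i, κ i => x p.1 p.2) (fun p => hx _ _)
    (SSum.sigma (a := fun i j => star (x i j) * x i j) (fun i j => star_mul_self_nonneg _) h1 ha)
    (SSum.sigma (a := fun i j => x i j * star (x i j)) (fun i j => mul_star_self_nonneg _) h2 hb)

lemma KPEquiv.add {M : VonNeumannAlgebra H} {a b c d : H →L[ℂ] H}
    (e : KPEquiv M a b) (f : KPEquiv M c d) : KPEquiv M (a + c) (b + d) :=
  KPEquiv.ssum (ι := Bool) (a := fun i => cond i a c) (b := fun i => cond i b d)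
    (fun i => by cases i <;> assumption) (SSum.bool _) (SSum.bool _)

/-- the common refinement -/
lemma KPEquiv.refine {M : VonNeumannAlgebra H} {k : H →L[ℂ] H} {ι κ : Type*}
    {x : ι → H →L[ℂ] H} {y : κ → H →L[ℂ] H} (hk : k ∈ M) (hx : ∀ i, x i ∈ M) (hy : ∀ j, y j ∈ M)
    (h1 : SSum (fun i => x i * star (x i)) k) (h2 : SSum (fun j => star (y j) * y j) k) :
    ∃ z : ι → κ → H →L[ℂ] H, (∀ i j, z i j ∈ M) ∧
      (∀ i, SSum (fun j => star (z i j) * z i j) (star (x i) * x i)) ∧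
      (∀ j, SSum (fun i => z i j * star (z i j)) (y j * star (y j))) := by
  have k0 : 0 ≤ k := h1.nonneg fun i => mul_star_self_nonneg _
  set s := CFC.sqrt k with hs
  have sm : s ∈ M := sqrt_mem hk
  have ssa : IsSelfAdjoint s := sa_of_nonneg (CFC.sqrt_nonneg k)
  have hss : s * s = k := CFC.sqrt_mul_sqrt_self k k0
  have ha : ∀ i, ∃ a ∈ M, star (x i) = a * s := fun i =>
    douglas (star_mem (hx i)) sm ssa (by
      rw [hss, star_star]; exact h1.le (fun i => mul_star_self_nonneg _) i)
  have hb : ∀ j, ∃ b ∈ M, y j = b * s := fun j =>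
    douglas (hy j) sm ssa (by
      rw [hss]; exact h2.le (fun i => star_mul_self_nonneg _) j)
  choose a am ha using ha
  choose b bm hb using hb
  have hx' : ∀ i, x i = s * star (a i) := fun i => by
    rw [← star_star (x i), ha, star_mul, ssa.star_eq]
  refine ⟨fun i j => b j * s * star (a i), fun i j =>
    mul_mem (mul_mem (bm j) sm) (star_mem (am i)), fun i => ?_, fun j => ?_⟩
  · have := h2.conj (a i) (star (a i))
    convert this using 1
    · funext j; simp only [hb j, star_mul, star_star, ssa.star_eq, mul_assoc]
    · rw [ha, hx', ← hss]; simp only [mul_assoc]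
  · have := h1.conj (b j) (star (b j))
    convert this using 1
    · funext i; simp only [hx' i, star_mul, star_star, ssa.star_eq, mul_assoc]
    · rw [hb, ← hss, star_mul, ssa.star_eq]; simp only [mul_assoc]

lemma KPEquiv.trans {M : VonNeumannAlgebra H} {h k l : H →L[ℂ] H}
    (e : KPEquiv M h k) (f : KPEquiv M k l) : KPEquiv M h l := by
  have km := f.mem
  obtain ⟨ι, x, hx, h1, h2⟩ := e.out
  obtain ⟨κ, y, hy, h3, h4⟩ := f.out
  obtain ⟨z, zm, hz1, hz2⟩ := KPEquiv.refine km hx hy h2 h3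
  refine KPEquiv.mk' (fun p : Σ _ : ι, κ => z p.1 p.2) (fun p => zm _ _)
    (SSum.sigma (a := fun i j => star (z i j) * z i j) (fun i j => star_mul_self_nonneg _) hz1 h1) ?_
  have s := SSum.sigma (a := fun j i => z i j * star (z i j))
    (fun i j => mul_star_self_nonneg _) hz2 h4
  let e : (Σ _ : ι, κ) ≃ (Σ _ : κ, ι) :=
    ⟨fun p => ⟨p.2, p.1⟩, fun p => ⟨p.2, p.1⟩, fun _ => rfl, fun _ => rfl⟩
  exact s.equiv e

set_option maxHeartbeats 1000000 in
/-- Riesz decomposition -/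
lemma KPEquiv.riesz {M : VonNeumannAlgebra H} {h k : H →L[ℂ] H} {κ : Type*}
    {b : κ → H →L[ℂ] H} (e : KPEquiv M h k) (bm : ∀ j, b j ∈ M) (b0 : ∀ j, 0 ≤ b j)
    (hb : SSum b k) : ∃ a : κ → H →L[ℂ] H, (∀ j, KPEquiv M (a j) (b j)) ∧ SSum a h := by
  have km := e.symm.mem
  obtain ⟨ι, x, hx, h1, h2⟩ := e.out
  have hs : ∀ j, star (CFC.sqrt (b j)) = CFC.sqrt (b j) := fun j =>
    (sa_of_nonneg (CFC.sqrt_nonneg _)).star_eq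
  have hss : ∀ j, CFC.sqrt (b j) * CFC.sqrt (b j) = b j := fun j =>
    CFC.sqrt_mul_sqrt_self _ (b0 j)
  obtain ⟨z, zm, hz1, hz2⟩ := KPEquiv.refine (y := fun j => CFC.sqrt (b j)) km hx
    (fun j => sqrt_mem (bm j)) h2 (by simpa only [hs, hss] using hb)
  simp only [hs, hss] at hz2
  have ex : ∀ j, ∃ a, SSum (fun i => star (z i j) * z i j) a := fun j => by
    refine exists_SSum (k := h) (fun i => star_mul_self_nonneg _) fun F => ?_
    refine le_trans ?_ (h1.sum_le (fun i => star_mul_self_nonneg _) F)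
    exact Finset.sum_le_sum fun i _ => (hz1 i).le (fun j => star_mul_self_nonneg _) j
  choose a ha using ex
  refine ⟨a, fun j => KPEquiv.mk' (fun i => z i j) (fun i => zm i j) (ha j) (hz2 j), ?_⟩
  exact SSum.swap (a := fun i j => star (z i j) * z i j) (fun i j => star_mul_self_nonneg _) hz1 h1 ha

lemma KPEquiv.riesz2 {M : VonNeumannAlgebra H} {h b c : H →L[ℂ] H}
    (e : KPEquiv M h (b + c)) (bm : b ∈ M) (b0 : 0 ≤ b) (cm : c ∈ M) (c0 : 0 ≤ c) :
    ∃ u v, KPEquiv M u b ∧ KPEquiv M v c ∧ h = u + v := by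
  obtain ⟨a, ha, hs⟩ := e.riesz (b := fun i => cond i b c) (fun j => by cases j <;> assumption)
    (fun j => by cases j <;> assumption) (SSum.bool _)
  exact ⟨a true, a false, ha true, ha false, hs.unique (SSum.bool a)⟩

lemma KPEquiv.smul {M : VonNeumannAlgebra H} {h k : H →L[ℂ] H} (e : KPEquiv M h k) {c : ℝ}
    (hc : 0 ≤ c) : KPEquiv M ((c : ℂ) • h) ((c : ℂ) • k) := by
  obtain ⟨ι, x, hx, h1, h2⟩ := e.out
  have hcc : ((Real.sqrt c : ℝ) : ℂ) * ((Real.sqrt c : ℝ) : ℂ) = c := by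
    rw [← Complex.ofReal_mul, Real.mul_self_sqrt hc]
  have hst : star ((Real.sqrt c : ℝ) : ℂ) = ((Real.sqrt c : ℝ) : ℂ) := Complex.conj_ofReal _
  refine KPEquiv.mk' (fun i => ((Real.sqrt c : ℝ) : ℂ) • x i) (fun i => smul_mem' _ (hx i)) ?_ ?_
  · convert h1.smul (c : ℂ) using 1
    funext i; rw [star_smul, smul_mul_smul_comm, hst, hcc]
  · convert h2.smul (c : ℂ) using 1
    funext i; rw [star_smul, smul_mul_smul_comm, hst, hcc]

lemma KPEquiv.central {M : VonNeumannAlgebra H} {h k w : H →L[ℂ] H} (e : KPEquiv M h k)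
    (hw : IsCentralProj M w) : KPEquiv M (w * h) (w * k) := by
  obtain ⟨ι, x, hx, h1, h2⟩ := e.out
  obtain ⟨⟨wm, wsa, ww⟩, wc⟩ := hw
  refine KPEquiv.mk' (fun i => w * x i) (fun i => mul_mem wm (hx i)) ?_ ?_
  · convert h1.mulLeft w using 1
    funext i
    rw [star_mul, wsa.star_eq, ← mul_assoc, mul_assoc _ w w, ww, ← wc _ (star_mem (hx i)), mul_assoc]
  · convert h2.mulLeft w using 1
    funext i
    rw [star_mul, wsa.star_eq, ← mul_assoc, mul_assoc w, mul_assoc w,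
      ← wc _ (mul_mem (hx i) (star_mem (hx i))), ← mul_assoc, ww]

/-- Subequivalence in the sense of Kadison and Pedersen. -/
def KPSub (M : VonNeumannAlgebra H) (h k : H →L[ℂ] H) : Prop := ∃ g, KPEquiv M h g ∧ g ≤ k

/-- Countable sums of mutually equivalent elements. -/
def SType (M : VonNeumannAlgebra H) (T : H →L[ℂ] H) : Prop :=
  ∃ d : ℕ → H →L[ℂ] H, (∀ n, KPEquiv M (d n) (d 0)) ∧ SSum d T

lemma exists_SSum_of_le {ι : Type*} {a b : ι → H →L[ℂ] H} {k : H →L[ℂ] H}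
    (ha : ∀ i, 0 ≤ a i) (hab : ∀ i, a i ≤ b i) (hb : SSum b k) : ∃ h, SSum a h ∧ h ≤ k := by
  have hl : ∀ s : Finset ι, ∑ i ∈ s, a i ≤ k := fun s =>
    (Finset.sum_le_sum fun i _ => hab i).trans (hb.sum_le (fun i => (ha i).trans (hab i)) s)
  obtain ⟨h, hh⟩ := exists_SSum ha hl
  exact ⟨h, hh, hh.le_of_sum_le ha hl⟩

lemma SType.mem {M : VonNeumannAlgebra H} {T : H →L[ℂ] H} (hT : SType M T) : T ∈ M := by
  obtain ⟨d, hd, hs⟩ := hT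
  exact hs.mem fun n => (hd n).mem

lemma SType.nonneg {M : VonNeumannAlgebra H} {T : H →L[ℂ] H} (hT : SType M T) : 0 ≤ T := by
  obtain ⟨d, hd, hs⟩ := hT
  exact hs.nonneg fun n => (hd n).nonneg

lemma SType.blocks {M : VonNeumannAlgebra H} {T : H →L[ℂ] H} (hT : SType M T) :
    ∃ B : ℕ → H →L[ℂ] H, (∀ n, KPEquiv M (B n) T) ∧ SSum B T := by
  obtain ⟨d, hd, hs⟩ := hT
  have d0 : ∀ n, 0 ≤ d n := fun n => (hd n).nonneg
  let e : (Σ _ : ℕ, ℕ) ≃ ℕ := (Equiv.sigmaEquivProd ℕ ℕ).trans Nat.pairEquiv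
  have s := hs.equiv e
  have ex : ∀ n, ∃ b, SSum (fun m => d (e ⟨n, m⟩)) b := fun n => by
    refine exists_SSum (k := T) (fun m => d0 _) fun F => ?_
    have := s.sum_le (fun p => d0 _) (F.map ⟨fun m => ⟨n, m⟩, fun a b h => by simpa using h⟩)
    rw [Finset.sum_map] at this
    exact this
  choose B hB using ex
  refine ⟨B, fun n => ?_, SSum.of_sigma (a := fun n m => d (e ⟨n, m⟩)) hB s⟩
  exact KPEquiv.ssum (fun m => (hd _).trans (hd m).symm) (hB n) hs

lemma SSum.cons {a : ℕ → H →L[ℂ] H} {P : H →L[ℂ] H} (h : H →L[ℂ] H) (ha : SSum a P) :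
    SSum (fun n : ℕ => Nat.casesOn n h a) (h + P) := fun ξ => by
  have := (hasSum_nat_add_iff' (f := fun n : ℕ => (Nat.casesOn n h a : H →L[ℂ] H) ξ)
    (g := (h + P) ξ) 1).1
  apply this
  simpa using ha ξ

/-- The swindle. -/
lemma SType.absorb {M : VonNeumannAlgebra H} {T h : H →L[ℂ] H} (hT : SType M T)
    (hh : KPSub M h T) : KPEquiv M (h + T) T := by
  obtain ⟨g, hg, gT⟩ := hh
  have gm := hg.symm.mem
  have g0 := hg.symm.nonneg
  have Tm := hT.mem
  obtain ⟨B, hB, hs⟩ := hT.blocks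
  have : ∀ n, ∃ u v, KPEquiv M u g ∧ KPEquiv M v (T - g) ∧ B n = u + v := fun n =>
    KPEquiv.riesz2 (by simpa using hB n) gm g0 (sub_mem Tm gm) (sub_nonneg.2 gT)
  choose p q hp hq hpq using this
  obtain ⟨P, hP, -⟩ := exists_SSum_of_le (a := p) (fun n => (hp n).nonneg)
    (fun n => by rw [hpq n]; exact le_add_of_nonneg_right (hq n).nonneg) hs
  obtain ⟨Q, hQ, -⟩ := exists_SSum_of_le (a := q) (fun n => (hq n).nonneg)
    (fun n => by rw [hpq n]; exact le_add_of_nonneg_left (hp n).nonneg) hs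
  have hT2 : T = P + Q := hs.unique (by
    have := hP.add hQ
    simpa only [← hpq] using this)
  have hPeq : KPEquiv M (h + P) P := by
    refine KPEquiv.ssum (fun n => ?_) (SSum.cons h hP) hP
    cases n with
    | zero => exact hg.trans (hp 0).symm
    | succ n => exact (hp n).trans (hp (n + 1)).symm
  have hQQ : KPEquiv M Q Q := KPEquiv.refl (hQ.mem fun n => (hq n).mem)
    (hQ.nonneg fun n => (hq n).nonneg)
  have := hPeq.add hQQ
  rwa [add_assoc, ← hT2] at this

lemma SType.sub_sum {M : VonNeumannAlgebra H} {T h : H →L[ℂ] H} (hT : SType M T)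
    {f : ℕ → H →L[ℂ] H} (hf : ∀ n, KPSub M (f n) T) (hs : SSum f h) : KPSub M h T := by
  obtain ⟨B, hB, hBs⟩ := hT.blocks
  have Tm := hT.mem
  have : ∀ n, ∃ g, KPEquiv M (f n) g ∧ g ≤ B n := fun n => by
    obtain ⟨g, hg, gT⟩ := hf n
    obtain ⟨u, v, hu, hv, huv⟩ := KPEquiv.riesz2 (h := B n) (b := g) (c := T - g)
      (by simpa using hB n) hg.symm.mem hg.symm.nonneg (sub_mem Tm hg.symm.mem) (sub_nonneg.2 gT)
    exact ⟨u, hg.trans hu.symm, by rw [huv]; exact le_add_of_nonneg_right hv.nonneg⟩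
  choose g hg hgB using this
  obtain ⟨G, hG, hGT⟩ := exists_SSum_of_le (fun n => (hg n).symm.nonneg) hgB hBs
  exact ⟨G, KPEquiv.ssum hg hs hG, hGT⟩

lemma KPSub.of_le_equiv {M : VonNeumannAlgebra H} {h k l : H →L[ℂ] H} (hm : h ∈ M) (h0 : 0 ≤ h)
    (hk : h ≤ k) (e : KPEquiv M k l) : KPSub M h l := by
  obtain ⟨u, v, hu, hv, huv⟩ := KPEquiv.riesz2 (h := l) (b := h) (c := k - h)
    (by simpa using e.symm) hm h0 (sub_mem e.mem hm) (sub_nonneg.2 hk)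
  exact ⟨u, hu.symm, by rw [huv]; exact le_add_of_nonneg_right hv.nonneg⟩

lemma SType.smul {M : VonNeumannAlgebra H} {T : H →L[ℂ] H} (hT : SType M T) {c : ℝ} (hc : 0 ≤ c) :
    SType M ((c : ℂ) • T) := by
  obtain ⟨d, hd, hs⟩ := hT
  exact ⟨fun n => (c : ℂ) • d n, fun n => (hd n).smul hc, hs.smul _⟩

lemma SType.pow {M : VonNeumannAlgebra H} {T : H →L[ℂ] H} (hT : SType M T) (m : ℕ) :
    KPEquiv M (((2 ^ m : ℝ) : ℂ) • T) T := by
  induction m with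
  | zero => simpa using KPEquiv.refl hT.mem hT.nonneg
  | succ m ih =>
    have h1 : KPEquiv M (T + T) T :=
      hT.absorb ⟨T, KPEquiv.refl hT.mem hT.nonneg, le_rfl⟩
    have h2 := h1.smul (c := 2 ^ m) (by positivity)
    have h3 : ((2 ^ m : ℝ) : ℂ) • (T + T) = ((2 ^ (m + 1) : ℝ) : ℂ) • T := by
      rw [← two_smul ℂ T, smul_smul, pow_succ]; push_cast; rfl
    rw [h3] at h2
    exact h2.trans ih

lemma smul_le_smul_op {T : H →L[ℂ] H} (hT : 0 ≤ T) {c d : ℝ} (h : c ≤ d) :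
    (c : ℂ) • T ≤ (d : ℂ) • T := by
  rw [ContinuousLinearMap.le_def, ← sub_smul, ← Complex.ofReal_sub]
  open scoped ComplexOrder in
  exact ((nonneg_iff_isPositive T).1 hT).smul_of_nonneg (by
    rw [Complex.zero_le_real]; linarith)

lemma SType.scale_sub {M : VonNeumannAlgebra H} {T : H →L[ℂ] H} (hT : SType M T) {c : ℝ}
    (hc : 0 ≤ c) : KPSub M ((c : ℂ) • T) T := by
  obtain ⟨m, hm⟩ := pow_unbounded_of_one_lt c (one_lt_two)
  exact KPSub.of_le_equiv (smul_mem' _ hT.mem) (hT.smul hc).nonneg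
    (smul_le_smul_op hT.nonneg hm.le) (hT.pow m)

lemma SType.scale {M : VonNeumannAlgebra H} {T : H →L[ℂ] H} (hT : SType M T) {c : ℝ}
    (hc : 0 < c) : KPEquiv M T ((c : ℂ) • T) := by
  have h1 := hT.absorb (hT.scale_sub hc.le)
  have h2 := (hT.smul hc.le).absorb ((hT.smul hc.le).scale_sub (c := c⁻¹) (by positivity))
  have : ((c⁻¹ : ℝ) : ℂ) • ((c : ℝ) : ℂ) • T = T := by
    rw [smul_smul, ← Complex.ofReal_mul, inv_mul_cancel₀ hc.ne']; simp
  rw [this, add_comm] at h2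
  exact h1.symm.trans h2

/-- Exhaustion by maximal families. -/
lemma exhaust {X : Type u} (good : X → Prop) (v₁ v₂ : X → H →L[ℂ] H) {h k : H →L[ℂ] H}
    (h0 : 0 ≤ h) (k0 : 0 ≤ k) (p₁ : ∀ x, good x → 0 ≤ v₁ x) (p₂ : ∀ x, good x → 0 ≤ v₂ x) :
    ∃ (ι : Type u) (x : ι → X) (a b : H →L[ℂ] H), (∀ i, good (x i)) ∧
      SSum (fun i => v₁ (x i)) a ∧ SSum (fun i => v₂ (x i)) b ∧ a ≤ h ∧ b ≤ k ∧
      ∀ y, good y → v₁ y ≤ h - a → v₂ y ≤ k - b → v₁ y = 0 := by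
  classical
  let F : Set (Set (X × ℕ)) := {A | ∀ s : Finset (X × ℕ), ↑s ⊆ A → (∀ p ∈ s, good p.1) ∧
    ∑ p ∈ s, v₁ p.1 ≤ h ∧ ∑ p ∈ s, v₂ p.1 ≤ k}
  have hF : Order.IsOfFiniteCharacter F := fun A => by
    constructor
    · intro hA B hB _ s hs
      exact hA s (hs.trans hB)
    · intro hA s hs
      exact hA s hs s.finite_toSet s subset_rfl
  have hemp : ∅ ∈ F := fun s hs => by
    have : s = ∅ := by simpa using hs
    subst this; simp [h0, k0]
  obtain ⟨A, -, hA⟩ := hF.exists_maximal hemp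
  have hAF : A ∈ F := hA.prop
  have hg : ∀ i : A, good i.1.1 := fun i =>
    (hAF {i.1} (by simp)).1 i.1 (by simp)
  have hsub : ∀ s : Finset A, ((s.map (Function.Embedding.subtype _) : Finset (X × ℕ)) : Set _) ⊆ A := by
    intro s p hp
    simp at hp
    exact hp.1
  have hl1 : ∀ s : Finset A, ∑ i ∈ s, v₁ i.1.1 ≤ h := fun s => by
    have := (hAF _ (hsub s)).2.1
    simpa using this
  have hl2 : ∀ s : Finset A, ∑ i ∈ s, v₂ i.1.1 ≤ k := fun s => by
    have := (hAF _ (hsub s)).2.2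
    simpa using this
  obtain ⟨a, ha⟩ := exists_SSum (fun i : A => p₁ _ (hg i)) hl1
  obtain ⟨b, hb⟩ := exists_SSum (fun i : A => p₂ _ (hg i)) hl2
  refine ⟨A, fun i => i.1.1, a, b, hg, ha, hb, ha.le_of_sum_le (fun i => p₁ _ (hg i)) hl1,
    hb.le_of_sum_le (fun i => p₂ _ (hg i)) hl2, fun y hy hy1 hy2 => ?_⟩
  have lift : ∀ s : Finset (X × ℕ), ↑s ⊆ A → ∑ p ∈ s, v₁ p.1 ≤ a ∧ ∑ p ∈ s, v₂ p.1 ≤ b := by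
    intro s hs
    have e : s = (s.subtype (· ∈ A)).map (Function.Embedding.subtype _) := by
      rw [Finset.subtype_map_of_mem]; exact fun x hx => hs hx
    have t1 := ha.sum_le (fun i => p₁ _ (hg i)) (s.subtype (· ∈ A))
    have t2 := hb.sum_le (fun i => p₂ _ (hg i)) (s.subtype (· ∈ A))
    rw [e, Finset.sum_map, Finset.sum_map]
    exact ⟨t1, t2⟩
  have hall : ∀ n : ℕ, (y, n) ∈ A := fun n => by
    by_contra hn
    have hins : insert (y, n) A ∈ F := by
      intro s hs
      have hs' : ((s.erase (y, n) : Finset _) : Set (X × ℕ)) ⊆ A := by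
        intro p hp
        simp only [Finset.coe_erase, Set.mem_sdiff, Set.mem_singleton_iff] at hp
        exact (hs hp.1).resolve_left hp.2
      obtain ⟨l1, l2⟩ := lift _ hs'
      refine ⟨fun p hp => ?_, ?_, ?_⟩
      · rcases hs hp with rfl | h
        · exact hy
        · exact hg ⟨p, h⟩
      · by_cases hm : (y, n) ∈ s
        · rw [← Finset.add_sum_erase _ _ hm]
          calc _ ≤ (h - a) + a := add_le_add hy1 l1
            _ = h := sub_add_cancel _ _
        · rw [Finset.erase_eq_of_notMem hm] at hs'
          exact (hAF s hs').2.1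
      · by_cases hm : (y, n) ∈ s
        · rw [← Finset.add_sum_erase _ _ hm]
          calc _ ≤ (k - b) + b := add_le_add hy2 l2
            _ = k := sub_add_cancel _ _
        · rw [Finset.erase_eq_of_notMem hm] at hs'
          exact (hAF s hs').2.2
    exact hn (hA.le_of_ge hins (Set.subset_insert _ _) (Set.mem_insert _ _))
  refine le_antisymm (le_of_qf (sa_of_nonneg (p₁ y hy)) (sa_of_nonneg le_rfl) fun ξ => ?_) (p₁ y hy)
  have z0 : qf (0 : H →L[ℂ] H) ξ = 0 := by simp [qf]
  rw [z0]
  by_contra! hpos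
  obtain ⟨N, hN⟩ := exists_nat_gt (qf h ξ / qf (v₁ y) ξ)
  rw [div_lt_iff₀ hpos] at hN
  have := (hAF ((Finset.range N).map ⟨fun n => (y, n), fun a b h => by simpa using h⟩) (by
    intro p hp
    simp only [Finset.coe_map, Function.Embedding.coeFn_mk, Set.mem_image] at hp
    obtain ⟨n, -, rfl⟩ := hp
    exact hall n)).2.1
  rw [Finset.sum_map] at this
  have := qf_mono this ξ
  rw [qf_sum] at this
  have this : ∑ _n ∈ Finset.range N, qf (v₁ y) ξ ≤ qf h ξ := this
  rw [Finset.sum_const, Finset.card_range, nsmul_eq_mul] at this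
  linarith

lemma IsCentralProj.compl {M : VonNeumannAlgebra H} {w : H →L[ℂ] H} (hw : IsCentralProj M w) :
    IsCentralProj M (1 - w) := by
  obtain ⟨⟨wm, wsa, ww⟩, wc⟩ := hw
  refine ⟨⟨sub_mem (one_mem M) wm, (IsSelfAdjoint.one _).sub wsa, ?_⟩, fun x hx => ?_⟩
  · simp [mul_sub, sub_mul, ww]
  · simp [mul_sub, sub_mul, wc x hx]

lemma IsCentralProj.mul_eq {M : VonNeumannAlgebra H} {w : H →L[ℂ] H} (hw : IsCentralProj M w)
    {a : H →L[ℂ] H} (ha : a ∈ M) : w * a = star w * a * w := by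
  obtain ⟨⟨wm, wsa, ww⟩, wc⟩ := hw
  rw [wsa.star_eq, mul_assoc, ← wc a ha, ← mul_assoc, ww]

lemma IsCentralProj.mul_mono {M : VonNeumannAlgebra H} {w : H →L[ℂ] H} (hw : IsCentralProj M w)
    {a b : H →L[ℂ] H} (ha : a ∈ M) (hb : b ∈ M) (h : a ≤ b) : w * a ≤ w * b := by
  rw [hw.mul_eq ha, hw.mul_eq hb]
  exact star_left_conjugate_le_conjugate h w

lemma IsCentralProj.mul_nonneg {M : VonNeumannAlgebra H} {w : H →L[ℂ] H} (hw : IsCentralProj M w)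
    {a : H →L[ℂ] H} (ha : a ∈ M) (h : 0 ≤ a) : 0 ≤ w * a := by
  simpa using hw.mul_mono (zero_mem M) ha h

lemma IsCentralProj.mul_le {M : VonNeumannAlgebra H} {w : H →L[ℂ] H} (hw : IsCentralProj M w)
    {a : H →L[ℂ] H} (ha : a ∈ M) (h : 0 ≤ a) : w * a ≤ a := by
  have := hw.compl.mul_nonneg ha h
  rw [sub_mul, one_mul] at this
  exact sub_nonneg.1 this

/-- The central carrier of an element of `M`. -/
lemma exists_carrier (M : VonNeumannAlgebra H) {f : H →L[ℂ] H} (hf : f ∈ M) :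
    ∃ w, IsCentralProj M w ∧ w * f = f ∧
      ∀ t : H →L[ℂ] H, (∀ x ∈ M, t * x * f = 0) → t * w = 0 := by
  let G : Submodule ℂ H := Submodule.span ℂ {v | ∃ x ∈ M, ∃ ξ, v = x (f ξ)}
  let K : Submodule ℂ H := G.topologicalClosure
  have Kc : IsClosed (K : Set H) := G.isClosed_topologicalClosure
  have : CompleteSpace K := Kc.completeSpace_coe
  have inv : ∀ y : H →L[ℂ] H, (∀ x ∈ M, ∀ ξ, y (x (f ξ)) ∈ K) → ∀ v ∈ K, y v ∈ K := by
    intro y hy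
    have h1 : G ≤ K.comap (y : H →ₗ[ℂ] H) := by
      refine Submodule.span_le.2 ?_
      rintro _ ⟨x, hx, ξ, rfl⟩
      exact hy x hx ξ
    have h2 : IsClosed ((K.comap (y : H →ₗ[ℂ] H) : Submodule ℂ H) : Set H) :=
      Kc.preimage y.continuous
    exact fun v hv => G.topologicalClosure_minimal h1 h2 hv
  have gen : ∀ x ∈ M, ∀ ξ, x (f ξ) ∈ K := fun x hx ξ =>
    G.le_topologicalClosure (Submodule.subset_span ⟨x, hx, ξ, rfl⟩)
  have invM : ∀ y ∈ M, ∀ v ∈ K, y v ∈ K := fun y hy =>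
    inv y fun x hx ξ => gen (y * x) (mul_mem hy hx) ξ
  have invM' : ∀ y ∈ M.commutant, ∀ v ∈ K, y v ∈ K := fun y hy =>
    inv y fun x hx ξ => by
      have : y (x (f ξ)) = x (f (y ξ)) :=
        congrArg (fun t : H →L[ℂ] H => t ξ) (comm_of_mem (mul_mem hx hf) hy)
      rw [this]; exact gen x hx _
  have hsp : IsStarProjection K.starProjection := isStarProjection_starProjection
  have hr : K.starProjection.range = K := K.range_starProjection
  have m1 : K.starProjection ∈ M := by
    rw [VonNeumannAlgebra.IsStarProjection.mem_iff hsp M]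
    intro y hy
    rw [hr]
    exact fun v hv => invM' y hy v hv
  have m2 : K.starProjection ∈ M.commutant := by
    rw [VonNeumannAlgebra.IsStarProjection.mem_iff hsp M.commutant, M.commutant_commutant]
    intro y hy
    rw [hr]
    exact fun v hv => invM y hy v hv
  refine ⟨K.starProjection, ⟨⟨m1, hsp.isSelfAdjoint, hsp.isIdempotentElem⟩, fun x hx =>
    comm_of_mem hx m2⟩, ?_, fun t ht => ?_⟩
  · ext ξ
    exact Submodule.starProjection_eq_self_iff.2 (gen 1 (one_mem M) ξ)
  · have h1 : G ≤ LinearMap.ker (t : H →ₗ[ℂ] H) := by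
      refine Submodule.span_le.2 ?_
      rintro _ ⟨x, hx, ξ, rfl⟩
      exact congrArg (fun s : H →L[ℂ] H => s ξ) (ht x hx)
    have h2 := G.topologicalClosure_minimal h1 t.isClosed_ker
    ext ξ
    exact h2 (K.starProjection_apply_mem ξ)

lemma star_mul_self_le {y t T : H →L[ℂ] H} (ht : IsSelfAdjoint t) (htt : t * t = T)
    (h : ∀ ξ, ‖y ξ‖ ≤ ‖t ξ‖) : star y * y ≤ T := by
  have e : T = star t * t := by rw [ht.star_eq, htt]
  rw [e]
  refine le_of_qf (IsSelfAdjoint.star_mul_self _) (IsSelfAdjoint.star_mul_self _) fun ξ => ?_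
  rw [qf_star_mul_self, qf_star_mul_self]
  gcongr; exact h ξ

/-- The comparison theorem. -/
lemma comparison (M : VonNeumannAlgebra H) {f T : H →L[ℂ] H} (hf : f ∈ M) (f0 : 0 ≤ f)
    (hT : T ∈ M) (T0 : 0 ≤ T) :
    ∃ w, IsCentralProj M w ∧ KPSub M (w * T) (w * f) ∧ KPSub M ((1 - w) * f) ((1 - w) * T) := by
  obtain ⟨ι, x, a, b, hx, ha, hb, hale, hble, hmax⟩ := exhaust (fun x : H →L[ℂ] H => x ∈ M)
    (fun x => star x * x) (fun x => x * star x) T0 f0 (fun x _ => star_mul_self_nonneg x)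
    (fun x _ => mul_star_self_nonneg x)
  have hab : KPEquiv M a b := KPEquiv.mk' x hx ha hb
  have am := hab.mem
  have bm := hab.symm.mem
  have f'm : f - b ∈ M := sub_mem hf bm
  have T'm : T - a ∈ M := sub_mem hT am
  set s := CFC.sqrt (f - b) with hs
  set t := CFC.sqrt (T - a) with ht
  have ss : s * s = f - b := CFC.sqrt_mul_sqrt_self _ (sub_nonneg.2 hble)
  have tt : t * t = T - a := CFC.sqrt_mul_sqrt_self _ (sub_nonneg.2 hale)
  have ssa : IsSelfAdjoint s := sa_of_nonneg (CFC.sqrt_nonneg _)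
  have tsa : IsSelfAdjoint t := sa_of_nonneg (CFC.sqrt_nonneg _)
  have sm : s ∈ M := sqrt_mem f'm
  have tm : t ∈ M := sqrt_mem T'm
  have key : ∀ x ∈ M, s * x * t = 0 := by
    intro x hx
    set c : ℝ := (‖s * x‖ + ‖t * star x‖ + 1)⁻¹ with hc
    have c0 : 0 < c := by positivity
    have c1 : c * ‖s * x‖ ≤ 1 := by
      rw [hc, inv_mul_le_one₀ (by positivity)]; linarith [norm_nonneg (t * star x)]
    have c2 : c * ‖t * star x‖ ≤ 1 := by
      rw [hc, inv_mul_le_one₀ (by positivity)]; linarith [norm_nonneg (s * x)]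
    have cn : ‖(c : ℂ)‖ = c := by simp [abs_of_pos c0]
    have hy := hmax ((c : ℂ) • (s * x * t)) (smul_mem' _ (mul_mem (mul_mem sm hx) tm))
      (star_mul_self_le tsa tt fun ξ => by
        have : ((c : ℂ) • (s * x * t)) ξ = (c : ℂ) • ((s * x) (t ξ)) := rfl
        rw [this, norm_smul, cn]
        calc c * ‖(s * x) (t ξ)‖ ≤ c * (‖s * x‖ * ‖t ξ‖) := by gcongr; exact le_opNorm _ _
          _ = (c * ‖s * x‖) * ‖t ξ‖ := by ring
          _ ≤ 1 * ‖t ξ‖ := by gcongr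
          _ = _ := one_mul _)
      (by
        have h2 := star_mul_self_le (y := star ((c : ℂ) • (s * x * t))) ssa ss fun ξ => by
          have : star ((c : ℂ) • (s * x * t)) = (c : ℂ) • ((t * star x) * s) := by
            rw [star_smul, star_mul, star_mul, ssa.star_eq, tsa.star_eq, mul_assoc]
            congr 1
            exact Complex.conj_ofReal _
          rw [this]
          have : ((c : ℂ) • ((t * star x) * s)) ξ = (c : ℂ) • ((t * star x) (s ξ)) := rfl
          rw [this, norm_smul, cn]
          calc c * ‖(t * star x) (s ξ)‖ ≤ c * (‖t * star x‖ * ‖s ξ‖) := by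
                gcongr; exact le_opNorm _ _
            _ = (c * ‖t * star x‖) * ‖s ξ‖ := by ring
            _ ≤ 1 * ‖s ξ‖ := by gcongr
            _ = _ := one_mul _
        rwa [star_star] at h2)
    have := (CStarRing.star_mul_self_eq_zero_iff _).1 hy
    exact (smul_eq_zero.1 this).resolve_left (by exact_mod_cast c0.ne')
  obtain ⟨w, hw, hwf, hwt⟩ := exists_carrier M f'm
  have h1 : (T - a) * w = 0 := hwt _ fun x hx => by
    have := congrArg star (key (star x) (star_mem hx))
    rw [star_mul, star_mul, star_star, ssa.star_eq, tsa.star_eq, star_zero] at this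
    calc (T - a) * x * (f - b) = t * (t * (x * s)) * s := by rw [← tt, ← ss]; simp only [mul_assoc]
      _ = 0 := by rw [this, mul_zero, zero_mul]
  have h2 : w * (T - a) = 0 := by rw [hw.2 _ T'm, h1]
  have h3 : w * T = w * a := by rw [mul_sub] at h2; exact sub_eq_zero.1 h2
  have h4 : (1 - w) * f = (1 - w) * b := by
    rw [← sub_eq_zero, ← mul_sub, sub_mul, one_mul, hwf, sub_self]
  refine ⟨w, hw, ⟨w * b, ?_, hw.mul_mono bm hf hble⟩,
    ⟨(1 - w) * a, ?_, hw.compl.mul_mono am hT hale⟩⟩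
  · rw [h3]; exact hab.central hw
  · rw [h4]; exact hab.symm.central hw.compl

lemma KPFinite.mono {M : VonNeumannAlgebra H} {h l : H →L[ℂ] H} (hh : KPFinite M h)
    (hm : h ∈ M) (lm : l ∈ M) (l0 : 0 ≤ l) (hl : l ≤ h) : KPFinite M l := by
  intro l' l'm l'0 l'l e
  have l'l : l' ≤ l := l'l
  have l'0 : 0 ≤ l' := (nonneg_iff_isPositive _).2 l'0
  have e2 : KPEquiv M ((h - l) + l) ((h - l) + l') :=
    (KPEquiv.refl (sub_mem hm lm) (sub_nonneg.2 hl)).add e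
  rw [sub_add_cancel] at e2
  have := hh ((h - l) + l') (add_mem (sub_mem hm lm) l'm)
    ((nonneg_iff_isPositive _).1 (add_nonneg (sub_nonneg.2 hl) l'0))
    (show h - l + l' ≤ h by
      calc h - l + l' ≤ h - l + l := add_le_add le_rfl l'l
        _ = h := sub_add_cancel _ _) e2
  have h3 : h - l + l' = h - l + l := by rw [this, sub_add_cancel]
  exact add_left_cancel h3

/-- an element that is subequivalent to a finite element and of `SType` vanishes -/
lemma SType.eq_zero_of_finite {M : VonNeumannAlgebra H} {T f : H →L[ℂ] H} (hT : SType M T)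
    (fm : f ∈ M) (hf : KPFinite M f) (hs : KPSub M T f) : T = 0 := by
  obtain ⟨g, hg, gf⟩ := hs
  have gfin : KPFinite M g := hf.mono fm hg.symm.mem hg.symm.nonneg gf
  have Tm := hT.mem
  obtain ⟨d, hd, hds⟩ := hT
  have dn : ∀ n, 0 ≤ d n := fun n => (hd n).nonneg
  have d0T : d 0 ≤ T := hds.le dn 0
  have tail : KPEquiv M (T - d 0) T := by
    refine KPEquiv.ssum (ι := ℕ) (a := fun n => d (n + 1)) (b := d)
      (fun n => (hd _).trans (hd n).symm) (fun ξ => ?_) hds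
    have := (hasSum_nat_add_iff' 1).2 (hds ξ)
    simpa using this
  obtain ⟨u, v, hu, hv, huv⟩ := KPEquiv.riesz2 (h := g) (b := d 0) (c := T - d 0)
    (by simpa using hg.symm) (hd 0).mem (dn 0) (sub_mem Tm (hd 0).mem) (sub_nonneg.2 d0T)
  have hvg : KPEquiv M g v := hg.symm.trans (tail.symm.trans hv.symm)
  have : v = g := gfin v hv.mem ((nonneg_iff_isPositive _).1 hv.nonneg)
    (show v ≤ g by rw [huv]; exact le_add_of_nonneg_left hu.nonneg) hvg
  have u0 : u = 0 := by rw [this] at huv; simpa using huv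
  have dz : ∀ n, d n = 0 := fun n => by
    refine KPEquiv.zero_right ((hd n).trans ?_)
    rw [← u0]; exact hu.symm
  refine hds.unique fun ξ => ?_
  simpa [dz] using (hasSum_zero : HasSum (fun _ : ℕ => (0 : H)) 0)

lemma SType.central {M : VonNeumannAlgebra H} {T w : H →L[ℂ] H} (hT : SType M T)
    (hw : IsCentralProj M w) : SType M (w * T) := by
  obtain ⟨d, hd, hs⟩ := hT
  exact ⟨fun n => w * d n, fun n => (hd n).central hw, hs.mulLeft w⟩

lemma SType.sub_finite {M : VonNeumannAlgebra H} {T f : H →L[ℂ] H} (hT : SType M T)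
    (fm : f ∈ M) (f0 : 0 ≤ f) (hf : KPFinite M f)
    (hc : ∀ w, IsCentralProj M w → w * T = 0 → w * f = 0) : KPSub M f T := by
  obtain ⟨w, hw, h1, h2⟩ := comparison M fm f0 hT.mem hT.nonneg
  have wfm : w * f ∈ M := mul_mem hw.1.1 fm
  have := (hT.central hw).eq_zero_of_finite wfm
    (hf.mono fm wfm (hw.mul_nonneg fm f0) (hw.mul_le fm f0)) h1
  have h3 := hc w hw this
  obtain ⟨g, hg, hgT⟩ := h2
  rw [sub_mul, one_mul, h3, sub_zero] at hg
  exact ⟨g, hg, hgT.trans (hw.compl.mul_le hT.mem hT.nonneg)⟩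

/-- An infinite element dominates a nonzero element of `SType`. -/
lemma exists_SType_of_infinite {M : VonNeumannAlgebra H} {r : H →L[ℂ] H}
    (hr : ¬ KPFinite M r) :
    ∃ (d : ℕ → H →L[ℂ] H) (S : H →L[ℂ] H), (∀ n, KPEquiv M (d n) (d 0)) ∧ d 0 ≠ 0 ∧ SSum d S ∧
      S ≤ r := by
  rw [KPFinite] at hr
  push Not at hr
  obtain ⟨r', r'm, -, hle, e, hne⟩ := hr
  have hle : r' ≤ r := hle
  let P : Type u := {p : (H →L[ℂ] H) × (H →L[ℂ] H) // p.2 ≤ p.1 ∧ KPEquiv M p.1 p.2}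
  have step : ∀ p : P, ∃ q : P, q.1.1 = p.1.2 ∧ KPEquiv M (q.1.1 - q.1.2) (p.1.1 - p.1.2) := by
    rintro ⟨⟨a, a'⟩, hle, e⟩
    dsimp only at hle e
    obtain ⟨u, v, hu, hv, huv⟩ := KPEquiv.riesz2 (h := a') (b := a - a') (c := a')
      (by simpa using e.symm) (sub_mem e.mem e.symm.mem) (sub_nonneg.2 hle) e.symm.mem e.symm.nonneg
    refine ⟨⟨(a', v), ?_, hv.symm⟩, rfl, ?_⟩
    · show v ≤ a'
      rw [huv]
      exact le_add_of_nonneg_left hu.nonneg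
    · show KPEquiv M (a' - v) (a - a')
      have : a' - v = u := by nth_rewrite 1 [huv]; simp
      rw [this]; exact hu
  choose nxt hn1 hn2 using step
  let p : ℕ → P := fun n => Nat.rec ⟨(r, r'), hle, e⟩ (fun _ q => nxt q) n
  have p0 : (p 0).1 = (r, r') := rfl
  have ps : ∀ n, p (n + 1) = nxt (p n) := fun n => rfl
  let d : ℕ → H →L[ℂ] H := fun n => (p n).1.1 - (p n).1.2
  have dsucc : ∀ n, KPEquiv M (d (n + 1)) (d n) := fun n => hn2 (p n)
  have d00 : KPEquiv M (d 0) (d 0) :=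
    KPEquiv.refl (sub_mem e.mem e.symm.mem) (sub_nonneg.2 hle)
  have hd : ∀ n, KPEquiv M (d n) (d 0) := fun n => by
    induction n with
    | zero => exact d00
    | succ n ih => exact (dsucc n).trans ih
  have tel : ∀ N, ∑ n ∈ Finset.range N, d n = r - (p N).1.1 := fun N => by
    induction N with
    | zero => simp [p0]
    | succ N ih =>
      rw [Finset.sum_range_succ, ih, ps, hn1]
      show r - (p N).1.1 + ((p N).1.1 - (p N).1.2) = _
      abel
  have bd : ∀ F : Finset ℕ, ∑ n ∈ F, d n ≤ r := fun F => by
    obtain ⟨N, hN⟩ := F.exists_nat_subset_range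
    calc ∑ n ∈ F, d n ≤ ∑ n ∈ Finset.range N, d n :=
          Finset.sum_le_sum_of_subset_of_nonneg hN fun n _ _ => (hd n).nonneg
      _ = r - (p N).1.1 := tel N
      _ ≤ r := sub_le_self _ (p N).2.2.nonneg
  obtain ⟨S, hS⟩ := exists_SSum (fun n => (hd n).nonneg) bd
  refine ⟨d, S, hd, ?_, hS, hS.le_of_sum_le (fun n => (hd n).nonneg) bd⟩
  exact sub_ne_zero.2 hne.symm

/-- Decomposition of a positive element. -/
lemma exists_decomp {M : VonNeumannAlgebra H} {k : H →L[ℂ] H} (k0 : 0 ≤ k) :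
    ∃ T, SType M T ∧ T ≤ k ∧ KPFinite M (k - T) := by
  classical
  let good : (ℕ → H →L[ℂ] H) → Prop := fun d => (∀ n, KPEquiv M (d n) (d 0)) ∧ ∃ S, SSum d S
  let v : (ℕ → H →L[ℂ] H) → H →L[ℂ] H := fun d => if h : ∃ S, SSum d S then h.choose else 0
  have hv : ∀ d, good d → SSum d (v d) := fun d hd => by
    have : v d = hd.2.choose := dif_pos hd.2
    rw [this]; exact hd.2.choose_spec
  have v0 : ∀ d, good d → 0 ≤ v d := fun d hd => (hv d hd).nonneg fun n => (hd.1 n).nonneg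
  obtain ⟨ι, x, T, b, hx, hT, hb, hTk, -, hmax⟩ := exhaust good v (fun _ => (0 : H →L[ℂ] H)) k0
    (le_refl 0) v0 (fun _ _ => le_rfl)
  have b0 : b = 0 := hb.unique fun ξ => by simpa using (hasSum_zero : HasSum (fun _ : ι => (0 : H)) 0)
  refine ⟨T, ?_, hTk, ?_⟩
  · have ex : ∀ n, ∃ t, SSum (fun i => x i n) t := fun n => by
      obtain ⟨t, ht, -⟩ := exists_SSum_of_le (a := fun i => x i n) (fun i => ((hx i).1 n).nonneg)
        (fun i => (hv _ (hx i)).le (fun m => ((hx i).1 m).nonneg) n) hT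
      exact ⟨t, ht⟩
    choose t ht using ex
    exact ⟨t, fun n => KPEquiv.ssum (fun i => (hx i).1 n) (ht n) (ht 0),
      SSum.swap (a := fun i n => x i n) (fun i n => ((hx i).1 n).nonneg) (fun i => hv _ (hx i)) hT ht⟩
  · by_contra hfin
    obtain ⟨d, S, hd, hd0, hS, hle⟩ := exists_SType_of_infinite hfin
    have gd : good d := ⟨hd, S, hS⟩
    have vS : v d = S := (hv d gd).unique hS
    have := hmax d gd (by rw [vS]; exact hle) (by simp [b0])
    rw [vS] at this
    have l := hS.le (fun n => (hd n).nonneg) 0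
    rw [this] at l
    exact hd0 (le_antisymm l (hd 0).nonneg)

/-- If `h, k ∈ M₊` have equal central support, `k` is properly infinite,
and `h` is a countable sum of finite elements, then `k ≈ λ k` for every `λ ∈ (0,∞)` and
`(h + k) ≈ k` (absorption). -/
theorem kp_absorption (M : VonNeumannAlgebra H) (h k z : H →L[ℂ] H)
    (hh : h ∈ M) (hk : k ∈ M) (hpos : h.IsPositive) (kpos : k.IsPositive)
    (hcs : IsCentralSupport M h z) (kcs : IsCentralSupport M k z)
    (kinf : KPProperlyInfinite M k)
    (hsum : ∃ f : ℕ → H →L[ℂ] H,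
      (∀ n, f n ∈ M ∧ (f n).IsPositive ∧ KPFinite M (f n)) ∧
      ∀ ξ : H, HasSum (fun n => f n ξ) (h ξ)) :
    (∀ c : ℝ, 0 < c → KPEquiv M k ((c : ℂ) • k)) ∧ KPEquiv M (h + k) k := by
  have k0 : 0 ≤ k := (nonneg_iff_isPositive _).2 kpos
  obtain ⟨T, hT, hTk, hfin⟩ := exists_decomp (M := M) k0
  have Tm := hT.mem
  have rm : k - T ∈ M := sub_mem hk Tm
  have r0 : 0 ≤ k - T := sub_nonneg.2 hTk
  have key : ∀ w, IsCentralProj M w → w * T = 0 → w * (k - T) = 0 ∧ w * h = 0 := by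
    intro w hw hwT
    have e1 : w * (k - T) = w * k := by rw [mul_sub, hwT, sub_zero]
    have fin : KPFinite M (w * k) := by
      rw [← e1]
      exact hfin.mono rm (mul_mem hw.1.1 rm) (hw.mul_nonneg rm r0) (hw.mul_le rm r0)
    have wk : w * k = 0 := kinf.2 w hw fin
    refine ⟨e1.trans wk, ?_⟩
    have h1 : z * (1 - w) = z :=
      kcs.2.2 (1 - w) hw.compl (by rw [sub_mul, one_mul, wk, sub_zero])
    have h2 : z * w = 0 := by
      rw [mul_sub, mul_one] at h1
      simpa using h1
    rw [← hcs.2.1, ← mul_assoc, hw.2 z hcs.1.1.1, h2, zero_mul]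
  have kT : KPEquiv M k T := by
    have := hT.absorb (hT.sub_finite rm r0 hfin fun w hw h => (key w hw h).1)
    rwa [sub_add_cancel] at this
  have hTT : KPEquiv M (h + T) T := by
    obtain ⟨f, hf, hs⟩ := hsum
    have f0 : ∀ n, 0 ≤ f n := fun n => (nonneg_iff_isPositive _).2 (hf n).2.1
    have hs' : SSum f h := hs
    refine hT.absorb (hT.sub_sum (fun n => ?_) hs')
    refine hT.sub_finite (hf n).1 (f0 n) (hf n).2.2 fun w hw hwT => ?_
    refine le_antisymm ?_ (hw.mul_nonneg (hf n).1 (f0 n))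
    rw [← (key w hw hwT).2]
    exact hw.mul_mono (hf n).1 hh (hs'.le f0 n)
  refine ⟨fun c hc => kT.trans ((hT.scale hc).trans (kT.smul hc.le).symm), ?_⟩
  exact ((KPEquiv.refl hh ((nonneg_iff_isPositive _).2 hpos)).add kT).trans (hTT.trans kT.symm)
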